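/- arXiv:2401.08078 — 2 statements merged into one kernel-verified Lean document; each statement's English description precedes it below -/
import Mathlib

section
/- Let 𝒜 be a weakly idempotent complete exact category and (𝒳,𝒴) a hereditary complete cotorsion pair with ω = 𝒳∩𝒴 contravariantly finite, so that (CoFib_ω, Fib_ω, Weq_ω) is a model structure on 𝒜. This model structure is exact in the sense of Gillespie if and only if 𝒜 has enough projective objects and ω equals the class 𝒫 of projective objects of 𝒜. -/
open CategoryTheory Limits ZeroObject

universe v u

/-- An exact structure (Quillen exact category) on an additive category `𝒜`:
a class of conflations (kernel-cokernel pairs), closed under isomorphisms,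
with identities deflations, deflations closed under composition and stable
under pullback, and inflations stable under pushout. -/
structure ExactStructure (𝒜 : Type u) [Category.{v} 𝒜] [Preadditive 𝒜]
    [HasZeroObject 𝒜] [HasBinaryBiproducts 𝒜] : Type (max u v) where
  conflation : ∀ ⦃X Y Z : 𝒜⦄, (X ⟶ Y) → (Y ⟶ Z) → Prop
  comp_zero : ∀ {X Y Z : 𝒜} {i : X ⟶ Y} {d : Y ⟶ Z}, conflation i d → i ≫ d = 0
  isKernel : ∀ {X Y Z : 𝒜} {i : X ⟶ Y} {d : Y ⟶ Z} (h : conflation i d),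
    Nonempty (IsLimit (KernelFork.ofι i (comp_zero h)))
  isCokernel : ∀ {X Y Z : 𝒜} {i : X ⟶ Y} {d : Y ⟶ Z} (h : conflation i d),
    Nonempty (IsColimit (CokernelCofork.ofπ d (comp_zero h)))
  conflation_iso : ∀ {X Y Z X' Y' Z' : 𝒜} {i : X ⟶ Y} {d : Y ⟶ Z}
    (eX : X ≅ X') (eY : Y ≅ Y') (eZ : Z ≅ Z') {i' : X' ⟶ Y'} {d' : Y' ⟶ Z'},
    conflation i d → i ≫ eY.hom = eX.hom ≫ i' → d ≫ eZ.hom = eY.hom ≫ d' →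
    conflation i' d'
  id_deflation : ∀ X : 𝒜, conflation (0 : (0 : 𝒜) ⟶ X) (𝟙 X)
  deflation_comp : ∀ {X Y Z X' W : 𝒜} {i : X ⟶ Y} {d : Y ⟶ Z} {i' : X' ⟶ Z} {d' : Z ⟶ W},
    conflation i d → conflation i' d' → ∃ (K : 𝒜) (k : K ⟶ Y), conflation k (d ≫ d')
  pullback_deflation : ∀ {X Y Z Z' : 𝒜} {i : X ⟶ Y} {d : Y ⟶ Z},
    conflation i d → ∀ (f : Z' ⟶ Z),
    ∃ (Y' : 𝒜) (f' : Y' ⟶ Y) (d' : Y' ⟶ Z') (K : 𝒜) (k : K ⟶ Y'),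
      IsPullback f' d' d f ∧ conflation k d'
  pushout_inflation : ∀ {X Y Z X' : 𝒜} {i : X ⟶ Y} {d : Y ⟶ Z},
    conflation i d → ∀ (f : X ⟶ X'),
    ∃ (Y' : 𝒜) (f' : Y ⟶ Y') (i' : X' ⟶ Y') (Q : 𝒜) (q : Y' ⟶ Q),
      IsPushout i f f' i' ∧ conflation i' q

variable {𝒜 : Type u} [Category.{v} 𝒜] [Preadditive 𝒜] [HasZeroObject 𝒜]
  [HasBinaryBiproducts 𝒜]

/-- `f` is an inflation: the first map of some conflation. -/
def IsInflation (E : ExactStructure 𝒜) {X Y : 𝒜} (i : X ⟶ Y) : Prop :=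
  ∃ (Z : 𝒜) (d : Y ⟶ Z), E.conflation i d

/-- `f` is a deflation: the second map of some conflation. -/
def IsDeflation (E : ExactStructure 𝒜) {Y Z : 𝒜} (d : Y ⟶ Z) : Prop :=
  ∃ (X : 𝒜) (i : X ⟶ Y), E.conflation i d

/-- `𝒜` is weakly idempotent complete: every split epimorphism is a deflation. -/
def IsWIC (E : ExactStructure 𝒜) : Prop :=
  ∀ {X Y : 𝒜} (d : X ⟶ Y) (s : Y ⟶ X), s ≫ d = 𝟙 Y → IsDeflation E d

/-- `Ext¹(A,B) = 0`: every conflation `B ⟶ M ⟶ A` splits. -/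
def Ext1IsZero (E : ExactStructure 𝒜) (A B : 𝒜) : Prop :=
  ∀ {M : 𝒜} (i : B ⟶ M) (d : M ⟶ A), E.conflation i d → ∃ r : M ⟶ B, i ≫ r = 𝟙 B

/-- `(X, Y)` is a cotorsion pair: each class is the `Ext¹`-orthogonal of the other. -/
def IsCotorsionPair (E : ExactStructure 𝒜) (X Y : Set 𝒜) : Prop :=
  (∀ A : 𝒜, A ∈ X ↔ ∀ B ∈ Y, Ext1IsZero E A B) ∧
  (∀ B : 𝒜, B ∈ Y ↔ ∀ A ∈ X, Ext1IsZero E A B)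

/-- Completeness of a cotorsion pair: every object has approximation sequences. -/
def IsCompleteCP (E : ExactStructure 𝒜) (X Y : Set 𝒜) : Prop :=
  ∀ A : 𝒜,
    (∃ (Y₀ X₀ : 𝒜) (i : Y₀ ⟶ X₀) (d : X₀ ⟶ A), E.conflation i d ∧ X₀ ∈ X ∧ Y₀ ∈ Y) ∧
    (∃ (Y₁ X₁ : 𝒜) (i : A ⟶ Y₁) (d : Y₁ ⟶ X₁), E.conflation i d ∧ X₁ ∈ X ∧ Y₁ ∈ Y)

/-- Heredity of a cotorsion pair: `X` is closed under kernels of deflations and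
`Y` is closed under cokernels of inflations. -/
def IsHereditaryCP (E : ExactStructure 𝒜) (X Y : Set 𝒜) : Prop :=
  (∀ {K A B : 𝒜} (i : K ⟶ A) (d : A ⟶ B), E.conflation i d → A ∈ X → B ∈ X → K ∈ X) ∧
  (∀ {K A B : 𝒜} (i : K ⟶ A) (d : A ⟶ B), E.conflation i d → K ∈ Y → A ∈ Y → B ∈ Y)

/-- `t : W ⟶ B` is a right `ω`-approximation of `B`. -/
def IsRightApprox (ω : Set 𝒜) {W B : 𝒜} (t : W ⟶ B) : Prop :=
  W ∈ ω ∧ ∀ (W' : 𝒜), W' ∈ ω → ∀ g : W' ⟶ B, ∃ h : W' ⟶ W, h ≫ t = g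

/-- `ω` is contravariantly finite: every object has a right `ω`-approximation. -/
def IsContravariantlyFinite (ω : Set 𝒜) : Prop :=
  ∀ B : 𝒜, ∃ (W : 𝒜) (t : W ⟶ B), IsRightApprox ω t

/-- A full additive subcategory closed under isomorphisms and direct summands,
viewed as a class of objects. -/
def AdditivelyClosed (S : Set 𝒜) : Prop :=
  (0 : 𝒜) ∈ S ∧ (∀ A B : 𝒜, A ∈ S → B ∈ S → (A ⊞ B) ∈ S) ∧
  (∀ {A B : 𝒜}, (A ≅ B) → A ∈ S → B ∈ S) ∧
  (∀ {A B : 𝒜} (i : A ⟶ B) (r : B ⟶ A), i ≫ r = 𝟙 A → B ∈ S → A ∈ S)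

/-- `CoFib_ω`: inflations with cokernel in `X`. -/
def CoFibO (E : ExactStructure 𝒜) (X : Set 𝒜) : MorphismProperty 𝒜 :=
  fun _ B f => ∃ (Z : 𝒜) (d : B ⟶ Z), E.conflation f d ∧ Z ∈ X

/-- `Fib_ω`: the `ω`-epic morphisms. -/
def FibO (ω : Set 𝒜) : MorphismProperty 𝒜 :=
  fun A B f => ∀ (W : 𝒜), W ∈ ω → ∀ g : W ⟶ B, ∃ h : W ⟶ A, h ≫ f = g

/-- `Weq_ω`: morphisms `f : A ⟶ B` such that for some `W ∈ ω` and `t : W ⟶ B`,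
`(f,t) : A ⊞ W ⟶ B` is a deflation with kernel in `Y`. -/
def WeqO (E : ExactStructure 𝒜) (ω Y : Set 𝒜) : MorphismProperty 𝒜 :=
  fun A B f => ∃ (W : 𝒜) (_ : W ∈ ω) (t : W ⟶ B) (K : 𝒜) (k : K ⟶ A ⊞ W),
    E.conflation k (biprod.desc f t) ∧ K ∈ Y

/-- `TCoFib_ω`: split monomorphisms with cokernel in `ω`. -/
def TCoFibO (E : ExactStructure 𝒜) (ω : Set 𝒜) : MorphismProperty 𝒜 :=
  fun A B f => (∃ r : B ⟶ A, f ≫ r = 𝟙 A) ∧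
    ∃ (Z : 𝒜) (d : B ⟶ Z), E.conflation f d ∧ Z ∈ ω

/-- `TFib_ω`: deflations with kernel in `Y`. -/
def TFibO (E : ExactStructure 𝒜) (Y : Set 𝒜) : MorphismProperty 𝒜 :=
  fun A _ f => ∃ (K : 𝒜) (k : K ⟶ A), E.conflation k f ∧ K ∈ Y

/-- `g` is a retract of `f`. -/
def IsRetractMor {A' B' A B : 𝒜} (g : A' ⟶ B') (f : A ⟶ B) : Prop :=
  ∃ (φ₁ : A' ⟶ A) (ψ₁ : A ⟶ A') (φ₂ : B' ⟶ B) (ψ₂ : B ⟶ B'),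
    φ₁ ≫ ψ₁ = 𝟙 A' ∧ φ₂ ≫ ψ₂ = 𝟙 B' ∧ φ₁ ≫ f = g ≫ φ₂ ∧ f ≫ ψ₂ = ψ₁ ≫ g

/-- A (closed, Quillen) model structure, given by classes of cofibrations,
fibrations and weak equivalences. -/
structure IsModelStructure (C F W : MorphismProperty 𝒜) : Prop where
  weq_comp : ∀ {X Y Z : 𝒜} (f : X ⟶ Y) (g : Y ⟶ Z), W f → W g → W (f ≫ g)
  weq_cancel_left : ∀ {X Y Z : 𝒜} (f : X ⟶ Y) (g : Y ⟶ Z), W f → W (f ≫ g) → W g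
  weq_cancel_right : ∀ {X Y Z : 𝒜} (f : X ⟶ Y) (g : Y ⟶ Z), W g → W (f ≫ g) → W f
  retract_cofib : ∀ {A' B' A B : 𝒜} (g : A' ⟶ B') (f : A ⟶ B),
    IsRetractMor g f → C f → C g
  retract_fib : ∀ {A' B' A B : 𝒜} (g : A' ⟶ B') (f : A ⟶ B),
    IsRetractMor g f → F f → F g
  retract_weq : ∀ {A' B' A B : 𝒜} (g : A' ⟶ B') (f : A ⟶ B),
    IsRetractMor g f → W f → W g
  lifting_left : ∀ {A B X Y : 𝒜} (i : A ⟶ B) (p : X ⟶ Y) (a : A ⟶ X) (b : B ⟶ Y),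
    C i → W i → F p → a ≫ p = i ≫ b → ∃ s : B ⟶ X, i ≫ s = a ∧ s ≫ p = b
  lifting_right : ∀ {A B X Y : 𝒜} (i : A ⟶ B) (p : X ⟶ Y) (a : A ⟶ X) (b : B ⟶ Y),
    C i → F p → W p → a ≫ p = i ≫ b → ∃ s : B ⟶ X, i ≫ s = a ∧ s ≫ p = b
  fact_left : ∀ {A B : 𝒜} (f : A ⟶ B), ∃ (Z : 𝒜) (i : A ⟶ Z) (p : Z ⟶ B),
    i ≫ p = f ∧ C i ∧ W i ∧ F p
  fact_right : ∀ {A B : 𝒜} (f : A ⟶ B), ∃ (Z : 𝒜) (j : A ⟶ Z) (q : Z ⟶ B),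
    j ≫ q = f ∧ C j ∧ F q ∧ W q

/-- An object is cofibrant if `0 ⟶ X` is a cofibration. -/
def Cofibrant (C : MorphismProperty 𝒜) (A : 𝒜) : Prop := C (0 : (0 : 𝒜) ⟶ A)

/-- An object is fibrant if `X ⟶ 0` is a fibration. -/
def Fibrant (F : MorphismProperty 𝒜) (A : 𝒜) : Prop := F (0 : A ⟶ (0 : 𝒜))

/-- An object is trivial if `0 ⟶ X` is a weak equivalence. -/
def TrivialObj (W : MorphismProperty 𝒜) (A : 𝒜) : Prop := W (0 : (0 : 𝒜) ⟶ A)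

/-- `P` is projective in the exact category. -/
def IsProjObj (E : ExactStructure 𝒜) (P : 𝒜) : Prop :=
  ∀ {A B : 𝒜} (d : A ⟶ B), IsDeflation E d → ∀ g : P ⟶ B, ∃ h : P ⟶ A, h ≫ d = g

/-- The exact category has enough projective objects. -/
def HasEnoughProj (E : ExactStructure 𝒜) : Prop :=
  ∀ X : 𝒜, ∃ (P : 𝒜) (d : P ⟶ X), IsProjObj E P ∧ IsDeflation E d

/-- Cofibrations are exactly the inflations with cofibrant cokernel. -/
def CofibsAreInflWithCofibCoker (E : ExactStructure 𝒜) (C : MorphismProperty 𝒜) : Prop :=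
  ∀ {A B : 𝒜} (f : A ⟶ B),
    C f ↔ ∃ (Z : 𝒜) (d : B ⟶ Z), E.conflation f d ∧ Cofibrant C Z

/-- Fibrations are exactly the deflations with fibrant kernel. -/
def FibsAreDeflWithFibKer (E : ExactStructure 𝒜) (F : MorphismProperty 𝒜) : Prop :=
  ∀ {A B : 𝒜} (f : A ⟶ B),
    F f ↔ ∃ (K : 𝒜) (k : K ⟶ A), E.conflation k f ∧ Fibrant F K

/-- Trivial fibrations are exactly the deflations with trivially fibrant kernel. -/
def TrivFibsAreDeflWithTrivFibKer (E : ExactStructure 𝒜)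
    (F W : MorphismProperty 𝒜) : Prop :=
  ∀ {A B : 𝒜} (f : A ⟶ B),
    (F f ∧ W f) ↔ ∃ (K : 𝒜) (k : K ⟶ A), E.conflation k f ∧ Fibrant F K ∧ TrivialObj W K

/-- Every cofibration is an inflation. -/
def CofibsAreInfl (E : ExactStructure 𝒜) (C : MorphismProperty 𝒜) : Prop :=
  ∀ {A B : 𝒜} (f : A ⟶ B), C f → IsInflation E f

/-- Every trivial fibration is a deflation. -/
def TrivFibsAreDefl (E : ExactStructure 𝒜) (F W : MorphismProperty 𝒜) : Prop :=
  ∀ {A B : 𝒜} (f : A ⟶ B), F f → W f → IsDeflation E f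

/-- An exact model structure in the sense of Gillespie. -/
def IsExactModelStr (E : ExactStructure 𝒜) (C F W : MorphismProperty 𝒜) : Prop :=
  IsModelStructure C F W ∧ CofibsAreInflWithCofibCoker E C ∧ FibsAreDeflWithFibKer E F

/-- A weakly projective model structure: every object is fibrant, cofibrations are
exactly the inflations with cofibrant cokernel, and trivial fibrations are exactly
the deflations with trivially fibrant kernel. -/
def IsWeaklyProjModelStr (E : ExactStructure 𝒜) (C F W : MorphismProperty 𝒜) : Prop :=
  IsModelStructure C F W ∧ (∀ A : 𝒜, Fibrant F A) ∧
    CofibsAreInflWithCofibCoker E C ∧ TrivFibsAreDeflWithTrivFibKer E F W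

/-- A projective model structure: an exact model structure with every object fibrant. -/
def IsProjectiveModelStr (E : ExactStructure 𝒜) (C F W : MorphismProperty 𝒜) : Prop :=
  IsExactModelStr E C F W ∧ (∀ A : 𝒜, Fibrant F A)

/-- A class of objects is thick: closed under direct summands and two-out-of-three
in conflations. -/
def IsThick (E : ExactStructure 𝒜) (S : Set 𝒜) : Prop :=
  (∀ {A B : 𝒜} (i : A ⟶ B) (r : B ⟶ A), i ≫ r = 𝟙 A → B ∈ S → A ∈ S) ∧
  (∀ {X Y Z : 𝒜} (i : X ⟶ Y) (d : Y ⟶ Z), E.conflation i d →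
    ((X ∈ S → Y ∈ S → Z ∈ S) ∧ (X ∈ S → Z ∈ S → Y ∈ S) ∧ (Y ∈ S → Z ∈ S → X ∈ S)))


section Helpers

variable {E : ExactStructure 𝒜}

lemma conf_mono {A B C : 𝒜} {i : A ⟶ B} {d : B ⟶ C} (h : E.conflation i d) : Mono i := by
  obtain ⟨hl⟩ := E.isKernel h
  exact ⟨fun a b hab => Fork.IsLimit.hom_ext hl hab⟩

lemma conf_epi {A B C : 𝒜} {i : A ⟶ B} {d : B ⟶ C} (h : E.conflation i d) : Epi d := by
  obtain ⟨hl⟩ := E.isCokernel h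
  exact ⟨fun a b hab => Cofork.IsColimit.hom_ext hl hab⟩

lemma conf_lift {A B C T : 𝒜} {i : A ⟶ B} {d : B ⟶ C} (h : E.conflation i d)
    (f : T ⟶ B) (hf : f ≫ d = 0) : ∃ g : T ⟶ A, g ≫ i = f := by
  obtain ⟨hl⟩ := E.isKernel h
  obtain ⟨g, hg⟩ := KernelFork.IsLimit.lift' hl f hf
  exact ⟨g, hg⟩

lemma conf_desc {A B C T : 𝒜} {i : A ⟶ B} {d : B ⟶ C} (h : E.conflation i d)
    (f : B ⟶ T) (hf : i ≫ f = 0) : ∃ g : C ⟶ T, d ≫ g = f := by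
  obtain ⟨hl⟩ := E.isCokernel h
  obtain ⟨g, hg⟩ := CokernelCofork.IsColimit.desc' hl f hf
  exact ⟨g, hg⟩

lemma conf_of_coker {A B C C' : 𝒜} {i : A ⟶ B} {d : B ⟶ C} (h : E.conflation i d)
    {q : B ⟶ C'} (hq : Epi q) (hiq : i ≫ q = 0) (g : C' ⟶ C) (hg : q ≫ g = d) :
    E.conflation i q := by
  obtain ⟨g', hg'⟩ := conf_desc h q hiq
  have := conf_epi h
  refine E.conflation_iso (Iso.refl _) (Iso.refl _)
    (⟨g', g, ?_, ?_⟩ : C ≅ C') h (by simp) (by simpa using hg')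
  · rw [← cancel_epi d, reassoc_of% hg', hg, Category.comp_id]
  · rw [← cancel_epi q, reassoc_of% hg, hg', Category.comp_id]

lemma conf_of_ker {A A' B C : 𝒜} {i : A ⟶ B} {d : B ⟶ C} (h : E.conflation i d)
    {k : A' ⟶ B} (hk : Mono k) (hkd : k ≫ d = 0) (g : A ⟶ A') (hg : g ≫ k = i) :
    E.conflation k d := by
  obtain ⟨g', hg'⟩ := conf_lift h k hkd
  have := conf_mono h
  refine E.conflation_iso (⟨g, g', ?_, ?_⟩ : A ≅ A') (Iso.refl _) (Iso.refl _)
     h (by simpa using hg.symm) (by simp)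
  · rw [← cancel_mono i, Category.assoc, hg', hg, Category.id_comp]
  · rw [← cancel_mono k, Category.assoc, hg, hg', Category.id_comp]

lemma conf_pushout {A B C A' B' : 𝒜} {i : A ⟶ B} {d : B ⟶ C} (h : E.conflation i d)
    {f : A ⟶ A'} {f' : B ⟶ B'} {i' : A' ⟶ B'} (po : IsPushout i f f' i') :
    ∃ q : B' ⟶ C, E.conflation i' q ∧ f' ≫ q = d := by
  obtain ⟨B'', f'', i'', Q, q₀, po'', hc⟩ := E.pushout_inflation h f
  have hw := E.comp_zero h
  have hc' : E.conflation i' ((po.isoIsPushout _ _ po'').hom ≫ q₀) :=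
    E.conflation_iso (Iso.refl _) (po.isoIsPushout _ _ po'').symm (Iso.refl _) hc
      (by simp) (by simp)
  generalize (po.isoIsPushout _ _ po'').hom ≫ q₀ = q' at hc'
  have hw' := E.comp_zero hc'
  have hfq : f' ≫ po.desc d 0 (by simp [hw]) = d := by simp
  have := conf_epi h
  refine ⟨po.desc d 0 (by simp [hw]), ?_, hfq⟩
  obtain ⟨g, hg⟩ := conf_desc h (f' ≫ q') (by rw [po.w_assoc, hw', comp_zero])
  refine conf_of_coker hc' ?_ (by simp) g ?_
  · exact @epi_of_epi_fac _ _ _ _ _ _ _ _ this hfq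
  · exact po.hom_ext (by rw [reassoc_of% hfq, hg]) (by simp [hw'])

lemma conf_pullback {A B C B' C' : 𝒜} {i : A ⟶ B} {d : B ⟶ C} (h : E.conflation i d)
    {f : C' ⟶ C} {f' : B' ⟶ B} {d' : B' ⟶ C'} (pb : IsPullback f' d' d f) :
    ∃ k : A ⟶ B', E.conflation k d' ∧ k ≫ f' = i := by
  obtain ⟨B'', f'', d'', K, k₀, pb'', hc⟩ := E.pullback_deflation h f
  have hw := E.comp_zero h
  have hc' : E.conflation (k₀ ≫ (pb''.isoIsPullback _ _ pb).hom) d' :=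
    E.conflation_iso (Iso.refl _) (pb''.isoIsPullback _ _ pb) (Iso.refl _) hc
      (by simp) (by simp)
  generalize k₀ ≫ (pb''.isoIsPullback _ _ pb).hom = k' at hc'
  have hw' := E.comp_zero hc'
  have hfq : pb.lift i 0 (by simp [hw]) ≫ f' = i := by simp
  have := conf_mono h
  refine ⟨pb.lift i 0 (by simp [hw]), ?_, hfq⟩
  obtain ⟨g, hg⟩ := conf_lift h (k' ≫ f') (by rw [Category.assoc, pb.w, reassoc_of% hw', zero_comp])
  refine conf_of_ker hc' ?_ (by simp) g ?_
  · exact @mono_of_mono_fac _ _ _ _ _ _ _ _ this hfq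
  · exact pb.hom_ext (by rw [Category.assoc, hfq, hg]) (by simp [hw'])

lemma conf_id_zero (A : 𝒜) : E.conflation (𝟙 A) (0 : A ⟶ 0) := by
  have po : IsPushout (0 : (0 : 𝒜) ⟶ 0) (0 : (0 : 𝒜) ⟶ A) (0 : (0 : 𝒜) ⟶ A) (𝟙 A) := by
    refine IsPushout.mk' (by simp) (fun T a b _ hb => by simpa using hb) ?_
    intro T a b _
    exact ⟨b, (isZero_zero 𝒜).eq_of_src _ _, by simp⟩
  have h0 := E.id_deflation (0 : 𝒜)
  obtain ⟨q, hq, -⟩ := conf_pushout h0 po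
  rwa [(isZero_zero 𝒜).eq_of_tgt q 0] at hq

lemma conf_biprod (A B : 𝒜) :
    E.conflation (biprod.inl : A ⟶ A ⊞ B) (biprod.snd : A ⊞ B ⟶ B) := by
  have pb : IsPullback (biprod.fst : A ⊞ B ⟶ A) biprod.snd (0 : A ⟶ 0) (0 : B ⟶ 0) := by
    refine IsPullback.mk' (by simp) (fun T a b h1 h2 => by apply biprod.hom_ext <;> assumption) ?_
    intro T a b _
    exact ⟨biprod.lift a b, by simp, by simp⟩
  obtain ⟨k, hk, hk'⟩ := conf_pullback (conf_id_zero (E := E) A) pb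
  have : k = biprod.inl := biprod.hom_ext _ _ (by simp [hk']) (by simp [E.comp_zero hk])
  rwa [this] at hk

lemma conf_split {A B C : 𝒜} {i : A ⟶ B} {d : B ⟶ C} {r : B ⟶ A} {s : C ⟶ B}
    (h1 : i ≫ r = 𝟙 A) (h2 : s ≫ d = 𝟙 C) (h3 : i ≫ d = 0) (h4 : s ≫ r = 0)
    (h5 : r ≫ i + d ≫ s = 𝟙 B) :
    E.conflation i d := by
  refine E.conflation_iso (Iso.refl A) (⟨biprod.desc i s, biprod.lift r d, ?_, ?_⟩ : A ⊞ C ≅ B)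
    (Iso.refl C) (conf_biprod A C) (by simp) ?_
  · ext <;> simp [*]
  · simp [*]
  · ext <;> simp [*]

lemma conf_section {A B C : 𝒜} {i : A ⟶ B} {d : B ⟶ C} (h : E.conflation i d)
    (s : C ⟶ B) (hs : s ≫ d = 𝟙 C) :
    ∃ r : B ⟶ A, i ≫ r = 𝟙 A ∧ s ≫ r = 0 ∧ r ≫ i + d ≫ s = 𝟙 B := by
  have := conf_mono h
  have hw := E.comp_zero h
  obtain ⟨r, hr⟩ := conf_lift h (𝟙 B - d ≫ s) (by simp [hs])
  refine ⟨r, ?_, ?_, by simp [hr]⟩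
  · rw [← cancel_mono i, Category.assoc, hr]; simp [reassoc_of% hw]
  · rw [← cancel_mono i, Category.assoc, hr]; simp [reassoc_of% hs]

lemma conf_retraction {A B C : 𝒜} {i : A ⟶ B} {d : B ⟶ C} (h : E.conflation i d)
    (r : B ⟶ A) (hr : i ≫ r = 𝟙 A) :
    ∃ s : C ⟶ B, s ≫ d = 𝟙 C ∧ s ≫ r = 0 ∧ r ≫ i + d ≫ s = 𝟙 B := by
  have := conf_epi h
  have hw := E.comp_zero h
  obtain ⟨s, hs⟩ := conf_desc h (𝟙 B - r ≫ i) (by simp [reassoc_of% hr])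
  refine ⟨s, ?_, ?_, by simp [hs]⟩
  · rw [← cancel_epi d, reassoc_of% hs]; simp [hw]
  · rw [← cancel_epi d, reassoc_of% hs]; simp [hr]

lemma infl_of_split (hwic : IsWIC E) {A B : 𝒜} (i : A ⟶ B) (r : B ⟶ A) (h : i ≫ r = 𝟙 A) :
    IsInflation E i := by
  obtain ⟨K, k, hk⟩ := hwic r i h
  obtain ⟨d, h1, h2, h3⟩ := conf_section hk i h
  exact ⟨K, d, conf_split h h1 h2 (E.comp_zero hk) (by rw [add_comm]; exact h3)⟩

lemma defl_comp {A B C : 𝒜} {f : A ⟶ B} {g : B ⟶ C} (hf : IsDeflation E f)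
    (hg : IsDeflation E g) : IsDeflation E (f ≫ g) := by
  obtain ⟨_, _, hf⟩ := hf
  obtain ⟨_, _, hg⟩ := hg
  exact E.deflation_comp hf hg

lemma defl_of_iso {A B : 𝒜} (f : A ≅ B) : IsDeflation E f.hom :=
  ⟨0, 0, E.conflation_iso (Iso.refl _) (Iso.refl _) f (E.id_deflation A) (by simp) (by simp)⟩

lemma infl_of_iso {A B : 𝒜} (f : A ≅ B) : IsInflation E f.hom :=
  ⟨0, 0, E.conflation_iso (Iso.refl _) f (Iso.refl _) (conf_id_zero A) (by simp) (by simp)⟩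

lemma conf_id_map {K A C : 𝒜} (B : 𝒜) {k : K ⟶ A} {h : A ⟶ C} (hh : E.conflation k h) :
    E.conflation (k ≫ biprod.inr) (biprod.map (𝟙 B) h) := by
  have pb : IsPullback (biprod.snd : B ⊞ A ⟶ A) (biprod.map (𝟙 B) h) h biprod.snd := by
    refine IsPullback.mk' (by simp) (fun T a b h1 h2 => ?_) ?_
    · apply biprod.hom_ext
      · simpa using h2 =≫ biprod.fst
      · exact h1
    · intro T a b hab
      refine ⟨biprod.lift (b ≫ biprod.fst) a, by simp, ?_⟩
      ext <;> simp [hab]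
  obtain ⟨k', hk', e⟩ := conf_pullback hh pb
  have : k' = k ≫ biprod.inr := by
    apply biprod.hom_ext
    · simpa using E.comp_zero hk' =≫ biprod.fst
    · simp [e]
  rwa [this] at hk'

lemma conf_id_map' {A C Q : 𝒜} (B : 𝒜) {h : A ⟶ C} {q : C ⟶ Q} (hh : E.conflation h q) :
    E.conflation (biprod.map (𝟙 B) h) (biprod.snd ≫ q) := by
  have po : IsPushout h (biprod.inr : A ⟶ B ⊞ A) (biprod.inr : C ⟶ B ⊞ C)
      (biprod.map (𝟙 B) h) := by
    refine IsPushout.mk' (by simp) (fun T a b h1 h2 => ?_) ?_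
    · apply biprod.hom_ext'
      · simpa using biprod.inl ≫= h2
      · exact h1
    · intro T a b hab
      refine ⟨biprod.desc (biprod.inl ≫ b) a, by simp, ?_⟩
      ext <;> simp [hab]
  obtain ⟨k', hk', e⟩ := conf_pushout hh po
  have : k' = biprod.snd ≫ q := by
    apply biprod.hom_ext'
    · simpa using biprod.inl ≫= E.comp_zero hk'
    · simp [e]
  rwa [this] at hk'

lemma defl_desc (hwic : IsWIC E) {A B C : 𝒜} (g : B ⟶ C) {h : A ⟶ C} (hh : IsDeflation E h) :
    IsDeflation E (biprod.desc g h) := by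
  obtain ⟨K, k, hk⟩ := hh
  have h1 : IsDeflation E (biprod.map (𝟙 B) h) := ⟨_, _, conf_id_map B hk⟩
  have h2 : IsDeflation E (biprod.desc g (𝟙 C)) := hwic _ biprod.inr (by simp)
  have := defl_comp h1 h2
  rwa [show biprod.map (𝟙 B) h ≫ biprod.desc g (𝟙 C) = biprod.desc g h by ext <;> simp] at this

lemma defl_of_desc_zero (hwic : IsWIC E) {A B C : 𝒜} {g : B ⟶ C}
    (h : IsDeflation E (biprod.desc g (0 : A ⟶ C))) : IsDeflation E g := by
  obtain ⟨M, m, hm⟩ := h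
  have hmm := conf_mono hm
  obtain ⟨s, hs⟩ := conf_lift hm (biprod.inr : A ⟶ B ⊞ A) (by simp)
  obtain ⟨K, k, hk⟩ := hwic (m ≫ biprod.snd) s (by simp [reassoc_of% hs])
  obtain ⟨r, hkr, hsr, hr⟩ := conf_section hk s (by simp [reassoc_of% hs])
  have po : IsPushout m r (biprod.fst : B ⊞ A ⟶ B) (k ≫ m ≫ biprod.fst) := by
    refine IsPushout.mk' ?_ (fun T a b h1 h2 => ?_) ?_
    · have := hr =≫ (m ≫ biprod.fst)
      simp only [Preadditive.add_comp, Category.assoc, reassoc_of% hs] at this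
      simpa using this.symm
    · rwa [cancel_epi] at h1
    · intro T a b hab
      have h1 : biprod.inr ≫ a = 0 := by rw [← hs, Category.assoc, hab, reassoc_of% hsr, zero_comp]
      have h2 : biprod.fst ≫ biprod.inl ≫ a = a := by ext <;> simp [h1]
      exact ⟨biprod.inl ≫ a, h2, by rw [Category.assoc, Category.assoc, h2, hab, reassoc_of% hkr]⟩
  obtain ⟨q, hq, e⟩ := conf_pushout hm po
  have : q = g := by simpa using biprod.inl ≫= e
  exact ⟨_, _, this ▸ hq⟩

lemma defl_of_comp (hwic : IsWIC E) {A B C : 𝒜} (f : A ⟶ B) (g : B ⟶ C)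
    (h : IsDeflation E (f ≫ g)) : IsDeflation E g := by
  have h1 := defl_desc hwic g h
  let e : B ⊞ A ≅ B ⊞ A := ⟨biprod.desc biprod.inl (biprod.inr - f ≫ biprod.inl),
    biprod.desc biprod.inl (biprod.inr + f ≫ biprod.inl), by ext <;> simp, by ext <;> simp⟩
  have h2 := defl_comp (defl_of_iso (E := E) e) h1
  rw [show e.hom ≫ biprod.desc g (f ≫ g) = biprod.desc g 0 by
    dsimp only [e]; ext <;> simp] at h2
  exact defl_of_desc_zero hwic h2

lemma conf_po_defl (hwic : IsWIC E) {A B Z C W : 𝒜} {i : A ⟶ B} {d : B ⟶ Z} {j : B ⟶ C}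
    {e : C ⟶ W} (h1 : E.conflation i d) (h2 : E.conflation j e) :
    ∃ (C' : 𝒜) (c : C ⟶ C') (z : Z ⟶ C') (w : C' ⟶ W), E.conflation z w ∧ c ≫ w = e ∧
      j ≫ c = d ≫ z ∧ E.conflation (i ≫ j) c := by
  obtain ⟨C', c, z, _, _, po, -⟩ := E.pushout_inflation h2 d
  obtain ⟨w, hzw, hcw⟩ := conf_pushout h2 po
  refine ⟨C', c, z, w, hzw, hcw, po.w, ?_⟩
  have := conf_mono h1
  have := conf_mono h2
  have := conf_mono hzw
  obtain ⟨D, p1, p2, _, _, pb, hp2⟩ := E.pullback_deflation h2 w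
  have hD : IsDeflation E (biprod.desc c z) := by
    let s : C ⟶ D := pb.lift (𝟙 C) c (by simp [hcw])
    obtain ⟨k, hk, hk2⟩ := conf_pullback hzw pb.flip
    have hs1 : s ≫ p1 = 𝟙 C := by simp [s]
    obtain ⟨r, hr1, hr2, hr3⟩ := conf_section hk s hs1
    have hs2 : s ≫ p2 = c := by simp [s]
    have hd := E.comp_zero hk
    let ε : C ⊞ Z ≅ D := ⟨biprod.desc s k, biprod.lift p1 r, by ext <;> simp [hr1, hr2, hs1, hd],
      by simp [add_comm, hr3]⟩
    have := defl_comp (defl_of_iso (E := E) ε) ⟨_, _, hp2⟩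
    rwa [show ε.hom ≫ p2 = biprod.desc c z by dsimp only [ε]; ext <;> simp [hs2, hk2]] at this
  have h3 := defl_comp ⟨_, _, conf_id_map C h1⟩ hD
  have h4 : biprod.map (𝟙 C) d ≫ biprod.desc c z = biprod.desc (𝟙 C) j ≫ c := by
    ext <;> simp [po.w]
  rw [h4] at h3
  obtain ⟨K, k, hk⟩ := defl_of_comp hwic _ _ h3
  obtain ⟨g, hg⟩ := conf_lift h2 k (by rw [← hcw, reassoc_of% (E.comp_zero hk), zero_comp])
  obtain ⟨g', hg'⟩ := conf_lift h1 g (by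
    rw [← cancel_mono z, Category.assoc, ← po.w, reassoc_of% hg, E.comp_zero hk, zero_comp])
  refine conf_of_ker hk (mono_comp _ _) ?_ g' ?_
  · rw [Category.assoc, po.w, reassoc_of% (E.comp_zero h1), zero_comp]
  · rw [reassoc_of% hg', hg]

lemma infl_comp (hwic : IsWIC E) {A B C : 𝒜} {f : A ⟶ B} {g : B ⟶ C} (hf : IsInflation E f)
    (hg : IsInflation E g) : IsInflation E (f ≫ g) := by
  obtain ⟨_, _, hf⟩ := hf
  obtain ⟨_, _, hg⟩ := hg
  obtain ⟨_, c, _, _, _, _, _, h⟩ := conf_po_defl hwic hf hg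
  exact ⟨_, c, h⟩

lemma infl_lift (hwic : IsWIC E) {A B C : 𝒜} (g : A ⟶ B) {h : A ⟶ C} (hh : IsInflation E h) :
    IsInflation E (biprod.lift g h) := by
  obtain ⟨K, k, hk⟩ := hh
  have h1 : IsInflation E (biprod.map (𝟙 B) h) := ⟨_, _, conf_id_map' B hk⟩
  have h2 : IsInflation E (biprod.lift g (𝟙 A)) := infl_of_split hwic _ biprod.snd (by simp)
  have := infl_comp hwic h2 h1
  rwa [show biprod.lift g (𝟙 A) ≫ biprod.map (𝟙 B) h = biprod.lift g h by ext <;> simp] at this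

lemma infl_of_lift_zero (hwic : IsWIC E) {A B C : 𝒜} {g : A ⟶ B}
    (h : IsInflation E (biprod.lift g (0 : A ⟶ C))) : IsInflation E g := by
  obtain ⟨M, m, hm⟩ := h
  have hmm := conf_epi hm
  obtain ⟨s, hs⟩ := conf_desc hm (biprod.snd : B ⊞ C ⟶ C) (by simp)
  obtain ⟨K, k, hk⟩ := infl_of_split hwic (biprod.inr ≫ m) s (by simp [hs])
  obtain ⟨r, hkr, hsr, hr⟩ := conf_retraction hk s (by simp [hs])
  have pb : IsPullback (biprod.inl : B ⟶ B ⊞ C) (biprod.inl ≫ m ≫ k) m r := by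
    refine IsPullback.mk' ?_ (fun T a b h1 h2 => ?_) ?_
    · have := (biprod.inl ≫ m) ≫= hr
      simp only [Preadditive.comp_add, Category.assoc, reassoc_of% hs] at this
      simpa using this.symm
    · rwa [cancel_mono] at h1
    · intro T a b hab
      have h1 : a ≫ biprod.snd = 0 := by rw [← hs, reassoc_of% hab, hsr, comp_zero]
      have h2 : (a ≫ biprod.fst) ≫ biprod.inl = a := by ext <;> simp [h1]
      exact ⟨a ≫ biprod.fst, h2, by rw [← Category.assoc, h2, reassoc_of% hab, hkr, Category.comp_id]⟩
  obtain ⟨q, hq, e⟩ := conf_pullback hm pb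
  have : q = g := by simpa using e =≫ biprod.fst
  exact ⟨_, _, this ▸ hq⟩

lemma infl_of_comp (hwic : IsWIC E) {A B C : 𝒜} (f : A ⟶ B) (g : B ⟶ C)
    (h : IsInflation E (f ≫ g)) : IsInflation E f := by
  have h1 := infl_lift hwic f h
  let e : B ⊞ C ≅ B ⊞ C := ⟨biprod.desc (biprod.inl - g ≫ biprod.inr) biprod.inr,
    biprod.desc (biprod.inl + g ≫ biprod.inr) biprod.inr, by ext <;> simp, by ext <;> simp⟩
  have h2 := infl_comp hwic h1 (infl_of_iso (E := E) e)
  rw [show biprod.lift f (f ≫ g) ≫ e.hom = biprod.lift f 0 by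
    dsimp only [e]; ext <;> simp] at h2
  exact infl_of_lift_zero hwic h2

lemma conf_comp_defl {K A B L C : 𝒜} {k : K ⟶ A} {d : A ⟶ B} {l : L ⟶ B} {d' : B ⟶ C}
    (h1 : E.conflation k d) (h2 : E.conflation l d') :
    ∃ (M : 𝒜) (m : M ⟶ A) (a : K ⟶ M) (b : M ⟶ L), E.conflation m (d ≫ d') ∧
      E.conflation a b ∧ a ≫ m = k ∧ m ≫ d = b ≫ l := by
  obtain ⟨K', k', h3⟩ := E.deflation_comp h1 h2
  obtain ⟨M, m, b, _, _, pb, -⟩ := E.pullback_deflation h1 l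
  obtain ⟨a, ha, ham⟩ := conf_pullback h1 pb
  have := conf_mono h2
  have hm : Mono m := ⟨fun u v huv => pb.hom_ext huv (by
    rw [← cancel_mono l, Category.assoc, Category.assoc, ← pb.w, reassoc_of% huv])⟩
  obtain ⟨g, hg⟩ := conf_lift h2 (k' ≫ d) (by simpa using E.comp_zero h3)
  refine ⟨M, m, a, b, conf_of_ker h3 hm ?_ (pb.lift k' g hg.symm) (by simp), ha, ham, pb.w⟩
  rw [pb.w_assoc, E.comp_zero h2, comp_zero]

lemma conf_map_id {K A C : 𝒜} (B : 𝒜) {k : K ⟶ A} {h : A ⟶ C} (hh : E.conflation k h) :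
    E.conflation (k ≫ biprod.inl) (biprod.map h (𝟙 B)) := by
  refine E.conflation_iso (Iso.refl _) (biprod.braiding B A) (biprod.braiding B C)
    (conf_id_map B hh) ?_ ?_
  · ext <;> simp
  · ext <;> simp

lemma conf_comp_section {A B C : 𝒜} (hz : Ext1IsZero E C A) {i : A ⟶ B} {d : B ⟶ C}
    (h : E.conflation i d) : ∃ s : C ⟶ B, s ≫ d = 𝟙 C := by
  obtain ⟨r, hr⟩ := hz i d h
  obtain ⟨s, hs, -⟩ := conf_retraction h r hr
  exact ⟨s, hs⟩

lemma ext1_of_section {A C : 𝒜}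
    (H : ∀ (B : 𝒜) (i : A ⟶ B) (d : B ⟶ C), E.conflation i d → ∃ s : C ⟶ B, s ≫ d = 𝟙 C) :
    Ext1IsZero E C A := by
  intro M i d h
  obtain ⟨s, hs⟩ := H M i d h
  obtain ⟨r, hr, -⟩ := conf_section h s hs
  exact ⟨r, hr⟩

lemma ext_hom_lift {T M A B : 𝒜} (hz : Ext1IsZero E B T) {i : T ⟶ M} {d : M ⟶ A}
    (h : E.conflation i d) (g : B ⟶ A) : ∃ s : B ⟶ M, s ≫ d = g := by
  obtain ⟨D, p1, p2, _, _, pb, -⟩ := E.pullback_deflation h g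
  obtain ⟨k, hk, -⟩ := conf_pullback h pb
  obtain ⟨s, hs⟩ := conf_comp_section hz hk
  exact ⟨s ≫ p1, by rw [Category.assoc, pb.w, reassoc_of% hs]⟩

lemma ext_hom_extend {T M A B : 𝒜} (hz : Ext1IsZero E A B) {i : T ⟶ M} {d : M ⟶ A}
    (h : E.conflation i d) (g : T ⟶ B) : ∃ s : M ⟶ B, i ≫ s = g := by
  obtain ⟨D, p1, p2, _, _, po, -⟩ := E.pushout_inflation h g
  obtain ⟨k, hk, -⟩ := conf_pushout h po
  obtain ⟨s, hs⟩ := hz _ _ hk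
  exact ⟨p1 ≫ s, by rw [po.w_assoc, hs, Category.comp_id]⟩

lemma ext_lifting {A B Z K M N : 𝒜} (hz : Ext1IsZero E Z K) {i : A ⟶ B} {d : B ⟶ Z}
    (h1 : E.conflation i d) {k : K ⟶ M} {p : M ⟶ N} (h2 : E.conflation k p)
    (a : A ⟶ M) (b : B ⟶ N) (hab : a ≫ p = i ≫ b) :
    ∃ s : B ⟶ M, i ≫ s = a ∧ s ≫ p = b := by
  have := conf_mono h1
  obtain ⟨Q, q1, q2, _, _, pb, -⟩ := E.pullback_deflation h2 b
  obtain ⟨k', hk', -⟩ := conf_pullback h2 pb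
  let a' : A ⟶ Q := pb.lift a i hab
  have ha1 : a' ≫ q1 = a := by simp [a']
  have ha2 : a' ≫ q2 = i := by simp [a']
  obtain ⟨N0, n, α, β, hn, hα, hαn, hβ⟩ := conf_comp_defl hk' h1
  obtain ⟨σ, hσ⟩ := conf_lift hn a' (by rw [reassoc_of% ha2, E.comp_zero h1])
  have hσβ : σ ≫ β = 𝟙 A := by
    rw [← cancel_mono i, Category.assoc, ← hβ, reassoc_of% hσ, ha2, Category.id_comp]
  obtain ⟨ρ, hρ1, hρ2, -⟩ := conf_section hα σ hσβ
  obtain ⟨τ, hτ⟩ := ext_hom_extend hz hn ρ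
  obtain ⟨s, hs1, hs2, hs3⟩ := conf_retraction hk' τ (by rw [← hαn, Category.assoc, hτ, hρ1])
  have h3 : i ≫ s = a' := by
    have := a' ≫= hs3
    rw [Preadditive.comp_add, reassoc_of% ha2, ← reassoc_of% hσ, reassoc_of% hτ,
      reassoc_of% hρ2] at this
    simpa [hσ] using this
  exact ⟨s ≫ q1, by rw [reassoc_of% h3, ha1], by rw [Category.assoc, pb.w, reassoc_of% hs1]⟩

variable {X Y : Set 𝒜}

lemma X_retract (hcp : IsCotorsionPair E X Y) {A B : 𝒜} (i : A ⟶ B) (r : B ⟶ A)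
    (h : i ≫ r = 𝟙 A) (hB : B ∈ X) : A ∈ X := by
  rw [hcp.1] at hB ⊢
  intro T hT
  refine ext1_of_section fun M j d hc => ?_
  obtain ⟨s, hs⟩ := ext_hom_lift (hB T hT) hc r
  exact ⟨i ≫ s, by rw [Category.assoc, hs, h]⟩

lemma Y_retract (hcp : IsCotorsionPair E X Y) {A B : 𝒜} (i : A ⟶ B) (r : B ⟶ A)
    (h : i ≫ r = 𝟙 A) (hB : B ∈ Y) : A ∈ Y := by
  rw [hcp.2] at hB ⊢
  intro T hT M j d hc
  obtain ⟨s, hs⟩ := ext_hom_extend (hB T hT) hc i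
  exact ⟨s ≫ r, by rw [reassoc_of% hs, h]⟩

lemma ext_zero (hcp : IsCotorsionPair E X Y) {A B : 𝒜} (hA : A ∈ X) (hB : B ∈ Y) :
    Ext1IsZero E A B := (hcp.1 A).1 hA B hB

lemma X_ext (hcp : IsCotorsionPair E X Y) {A B C : 𝒜} {i : A ⟶ B} {d : B ⟶ C}
    (h : E.conflation i d) (hA : A ∈ X) (hC : C ∈ X) : B ∈ X := by
  rw [hcp.1]
  intro T hT
  refine ext1_of_section fun M j e hc => ?_
  obtain ⟨s, hs⟩ := ext_hom_lift (ext_zero hcp hA hT) hc i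
  obtain ⟨t, -, ht⟩ := ext_lifting (ext_zero hcp hC hT) h hc s (𝟙 B) (by simp [hs])
  exact ⟨t, ht⟩

lemma Y_ext (hwic : IsWIC E) (hcp : IsCotorsionPair E X Y) {A B C : 𝒜} {i : A ⟶ B} {d : B ⟶ C}
    (h : E.conflation i d) (hA : A ∈ Y) (hC : C ∈ Y) : B ∈ Y := by
  rw [hcp.2]
  intro T hT
  refine ext1_of_section fun M j e hc => ?_
  obtain ⟨C', c, z, w, hzw, hcw, -, hic⟩ := conf_po_defl hwic h hc
  obtain ⟨s, hs⟩ := conf_comp_section (ext_zero hcp hT hC) hzw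
  obtain ⟨s', hs'⟩ := ext_hom_lift (ext_zero hcp hT hA) hic s
  exact ⟨s', by rw [← hcw, reassoc_of% hs', hs]⟩

lemma proj_mem_X (hcp : IsCotorsionPair E X Y) {P : 𝒜} (hP : IsProjObj E P) : P ∈ X := by
  rw [hcp.1]
  intro T hT
  exact ext1_of_section fun M j e hc => hP e ⟨_, _, hc⟩ (𝟙 P)

lemma Y_ker (hcp : IsCotorsionPair E X Y) (hcomp : IsCompleteCP E X Y)
    (hω : ∀ P, P ∈ X → P ∈ Y → IsProjObj E P) {K M L : 𝒜} {k : K ⟶ M} {m : M ⟶ L}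
    (h : E.conflation k m) (hM : M ∈ Y) (hL : L ∈ Y) : K ∈ Y := by
  rw [hcp.2]
  intro A hA N i d hc
  have := conf_mono h
  obtain ⟨φ, hφ⟩ := ext_hom_extend (ext_zero hcp hA hM) hc k
  obtain ⟨ψ, hψ⟩ := conf_desc hc (φ ≫ m) (by rw [reassoc_of% hφ, E.comp_zero h])
  obtain ⟨-, Y1, X1, j, e, hje, hX1, hY1⟩ := hcomp A
  have hP : IsProjObj E Y1 := hω Y1 (X_ext hcp hje hA hX1) hY1
  obtain ⟨χ, hχ⟩ := ext_hom_extend (ext_zero hcp hX1 hL) hje ψ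
  obtain ⟨ξ, hξ⟩ := hP m ⟨_, _, h⟩ χ
  obtain ⟨r, hr⟩ := conf_lift h (φ - d ≫ j ≫ ξ) (by simp [hξ, hχ, hψ])
  refine ⟨r, ?_⟩
  rw [← cancel_mono k, Category.assoc, hr]
  simp [hφ, reassoc_of% (E.comp_zero hc)]

lemma ker_compare (hwic : IsWIC E) (hcp : IsCotorsionPair E X Y)
    {A B P P' K K' : 𝒜} {f : A ⟶ B} {t : P ⟶ B} {t' : P' ⟶ B} {k : K ⟶ A ⊞ P} {k' : K' ⟶ A ⊞ P'}
    (h : E.conflation k (biprod.desc f t)) (h' : E.conflation k' (biprod.desc f t'))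
    (hP : IsProjObj E P) (hP' : IsProjObj E P') (hPY' : P' ∈ Y) (hK : K ∈ Y) : K' ∈ Y := by
  have hmk' := conf_mono h'
  obtain ⟨u, hu⟩ := hP' _ ⟨_, _, h⟩ t'
  obtain ⟨v, hv⟩ := hP _ ⟨_, _, h'⟩ t
  have e' := E.comp_zero h'
  have e := E.comp_zero h
  obtain ⟨φ, hφ⟩ := conf_lift h (k' ≫ biprod.fst ≫ biprod.inl + k' ≫ biprod.snd ≫ u) (by
    simp only [Preadditive.add_comp, Category.assoc, hu, biprod.inl_desc]
    rw [← e', biprod.desc_eq]; simp)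
  let x : K ⊞ P' ⟶ A ⊞ P := biprod.fst ≫ k - biprod.snd ≫ u
  have hx : x ≫ biprod.desc f t = - biprod.snd ≫ t' := by simp [x, e, hu]
  obtain ⟨ψ, hψ⟩ := conf_lift h' (x ≫ biprod.fst ≫ biprod.inl + x ≫ biprod.snd ≫ v +
      biprod.snd ≫ biprod.inr) (by
    simp only [Preadditive.add_comp, Category.assoc, hv, biprod.inl_desc, biprod.inr_desc]
    have : x ≫ biprod.fst ≫ f + x ≫ biprod.snd ≫ t = - biprod.snd ≫ t' := by
      rw [← hx, biprod.desc_eq]; simp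
    rw [this]; simp)
  have hlx : biprod.lift φ (k' ≫ biprod.snd) ≫ x = k' ≫ biprod.fst ≫ biprod.inl := by
    simp [x, hφ]
  refine Y_retract hcp (biprod.lift φ (k' ≫ biprod.snd)) ψ ?_
    (Y_ext hwic hcp (conf_biprod K P') hK hPY')
  rw [← cancel_mono k', Category.assoc, hψ]
  simp only [Preadditive.comp_add, reassoc_of% hlx]
  apply biprod.hom_ext <;> simp

lemma conf_desc_zero {K A B : 𝒜} {k : K ⟶ A} {p : A ⟶ B} (h : E.conflation k p) :
    E.conflation (k ≫ biprod.inl) (biprod.desc p (0 : (0 : 𝒜) ⟶ B)) := by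
  refine E.conflation_iso (Iso.refl _) (⟨biprod.inl, biprod.fst, by simp, ?_⟩ : A ≅ A ⊞ 0)
    (Iso.refl _) h (by simp) (by simp)
  ext <;> simp

lemma proj_zero : IsProjObj E (0 : 𝒜) := fun _ _ _ => ⟨0, (isZero_zero 𝒜).eq_of_src _ _⟩

lemma omega_proj (hω : X ∩ Y = {P : 𝒜 | IsProjObj E P}) {P : 𝒜} (hP : P ∈ X ∩ Y) :
    IsProjObj E P := by
  rw [hω] at hP
  exact @hP

lemma weq_iff (hwic : IsWIC E) (hcp : IsCotorsionPair E X Y)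
    (hω : X ∩ Y = {P : 𝒜 | IsProjObj E P}) {A B P K : 𝒜} {f : A ⟶ B} {t : P ⟶ B}
    {k : K ⟶ A ⊞ P} (hP : P ∈ X ∩ Y) (h : E.conflation k (biprod.desc f t)) :
    WeqO E (X ∩ Y) Y f ↔ K ∈ Y := by
  constructor
  · rintro ⟨W, hW, t', K', k', h', hK'⟩
    have h1 : IsProjObj E W := omega_proj hω hW
    have h2 : IsProjObj E P := omega_proj hω hP
    exact ker_compare hwic hcp h' h h1 h2 hP.2 hK'
  · intro hK
    exact ⟨P, hP, t, K, k, h, hK⟩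

lemma defl_weq_iff (hwic : IsWIC E) (hcp : IsCotorsionPair E X Y)
    (hω : X ∩ Y = {P : 𝒜 | IsProjObj E P}) {A B K : 𝒜} {f : A ⟶ B} {k : K ⟶ A}
    (h : E.conflation k f) : WeqO E (X ∩ Y) Y f ↔ K ∈ Y := by
  refine weq_iff hwic hcp hω ?_ (conf_desc_zero h)
  rw [hω]
  exact proj_zero

lemma omega_biprod (hwic : IsWIC E) (hcp : IsCotorsionPair E X Y) {P Q : 𝒜} (hP : P ∈ X ∩ Y)
    (hQ : Q ∈ X ∩ Y) : (P ⊞ Q) ∈ X ∩ Y :=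
  ⟨X_ext hcp (conf_biprod P Q) hP.1 hQ.1, Y_ext hwic hcp (conf_biprod P Q) hP.2 hQ.2⟩

lemma weq_triple (hwic : IsWIC E) (hcp : IsCotorsionPair E X Y) (hep : HasEnoughProj E)
    (hω : X ∩ Y = {P : 𝒜 | IsProjObj E P}) {A B C : 𝒜} (f : A ⟶ B) (g : B ⟶ C) :
    ∃ (K M L : 𝒜) (a : K ⟶ M) (b : M ⟶ L), E.conflation a b ∧
      (WeqO E (X ∩ Y) Y f ↔ K ∈ Y) ∧ (WeqO E (X ∩ Y) Y g ↔ L ∈ Y) ∧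
      (WeqO E (X ∩ Y) Y (f ≫ g) ↔ M ∈ Y) := by
  obtain ⟨P, t, hP, ht⟩ := hep B
  obtain ⟨Q, u, hQ, hu⟩ := hep C
  have hP' : P ∈ X ∩ Y := by rw [hω]; exact hP
  have hQ' : Q ∈ X ∩ Y := by rw [hω]; exact hQ
  obtain ⟨K, k, hk⟩ := defl_desc hwic f ht
  obtain ⟨L, l, hl⟩ := defl_desc hwic g hu
  obtain ⟨M, m, a, b, hm, hab, -⟩ := conf_comp_defl (conf_map_id Q hk) hl
  refine ⟨K, M, L, a, b, hab, weq_iff hwic hcp hω hP' hk, weq_iff hwic hcp hω hQ' hl, ?_⟩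
  have hm' : E.conflation (m ≫ (biprod.associator A P Q).hom)
      (biprod.desc (f ≫ g) (biprod.desc (t ≫ g) u)) := by
    refine E.conflation_iso (Iso.refl _) (biprod.associator A P Q) (Iso.refl _) hm (by simp) ?_
    ext <;> simp
  exact weq_iff hwic hcp hω (omega_biprod hwic hcp hP' hQ') hm'

lemma fib_iff (hwic : IsWIC E) (hep : HasEnoughProj E)
    (hω : X ∩ Y = {P : 𝒜 | IsProjObj E P}) {A B : 𝒜} (f : A ⟶ B) :
    FibO (X ∩ Y) f ↔ IsDeflation E f := by
  constructor
  · intro hf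
    obtain ⟨P, t, hP, ht⟩ := hep B
    obtain ⟨h, hh⟩ := hf P (by rw [hω]; exact hP) t
    exact defl_of_comp hwic h f (by rwa [hh])
  · intro hf W hW g
    rw [hω] at hW
    exact hW f hf g

lemma tcof (hwic : IsWIC E) (hher : IsHereditaryCP E X Y) {A B Z : 𝒜} {i : A ⟶ B} {d : B ⟶ Z}
    (h : E.conflation i d) (hZ : Z ∈ X) (hw : WeqO E (X ∩ Y) Y i) : Z ∈ X ∩ Y := by
  refine ⟨hZ, ?_⟩
  obtain ⟨P, hP, t, K, k, hk, hK⟩ := hw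
  have hmi := conf_mono h
  have hmk := conf_mono hk
  have e : k ≫ biprod.fst ≫ i + k ≫ biprod.snd ≫ t = 0 := by
    rw [← E.comp_zero hk, biprod.desc_eq]; simp
  have h1 : IsDeflation E (t ≫ d) := by
    have h2 : IsDeflation E (biprod.desc i t ≫ d) := defl_comp ⟨_, _, hk⟩ ⟨_, _, h⟩
    rw [show biprod.desc i t ≫ d = biprod.snd ≫ (t ≫ d) by
      ext <;> simp [E.comp_zero h]] at h2
    exact defl_of_comp hwic _ _ h2
  obtain ⟨L, l, hl⟩ := h1
  have e2 : (k ≫ biprod.snd) ≫ t = -((k ≫ biprod.fst) ≫ i) := by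
    rw [eq_neg_iff_add_eq_zero, add_comm]; simpa using e
  have hmono : Mono (k ≫ biprod.snd) := by
    refine Preadditive.mono_of_cancel_zero _ fun {T} g hg => ?_
    rw [← cancel_mono k, zero_comp]
    apply biprod.hom_ext
    · rw [← cancel_mono i]
      have := g ≫= e2
      rw [← Category.assoc, hg] at this
      simpa using this
    · simpa using hg
  obtain ⟨x, hx⟩ := conf_lift h (l ≫ t) (by simpa using E.comp_zero hl)
  obtain ⟨y, hy⟩ := conf_lift hk (biprod.lift (-x) l) (by simp [hx])
  have hc : E.conflation (k ≫ biprod.snd) (t ≫ d) := by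
    refine conf_of_ker hl hmono ?_ y (by rw [reassoc_of% hy]; simp)
    rw [← Category.assoc, e2]; simp [E.comp_zero h]
  exact hher.2 _ _ hc hK hP.2

lemma cofibrant_iff (hcp : IsCotorsionPair E X Y) (Z : 𝒜) : Cofibrant (CoFibO E X) Z ↔ Z ∈ X := by
  constructor
  · rintro ⟨Z', d, h, hZ'⟩
    obtain ⟨s, hs⟩ := conf_desc h (𝟙 Z) (by simp)
    exact X_retract hcp d s hs hZ'
  · intro hZ
    exact ⟨Z, 𝟙 Z, E.id_deflation Z, hZ⟩

lemma model (hwic : IsWIC E) (hcp : IsCotorsionPair E X Y) (hcomp : IsCompleteCP E X Y)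
    (hher : IsHereditaryCP E X Y) (hep : HasEnoughProj E)
    (hω : X ∩ Y = {P : 𝒜 | IsProjObj E P}) :
    IsModelStructure (CoFibO E X) (FibO (X ∩ Y)) (WeqO E (X ∩ Y) Y) := by
  have hωp : ∀ P, P ∈ X → P ∈ Y → IsProjObj E P := fun P h1 h2 => omega_proj hω ⟨h1, h2⟩
  constructor
  · intro A B C f g hf hg
    obtain ⟨K, M, L, a, b, hab, h1, h2, h3⟩ := weq_triple hwic hcp hep hω f g
    exact h3.2 (Y_ext hwic hcp hab (h1.1 hf) (h2.1 hg))
  · intro A B C f g hf hg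
    obtain ⟨K, M, L, a, b, hab, h1, h2, h3⟩ := weq_triple hwic hcp hep hω f g
    exact h2.2 (hher.2 _ _ hab (h1.1 hf) (h3.1 hg))
  · intro A B C f g hf hg
    obtain ⟨K, M, L, a, b, hab, h1, h2, h3⟩ := weq_triple hwic hcp hep hω f g
    exact h1.2 (Y_ker hcp hcomp hωp hab (h3.1 hg) (h2.1 hf))
  · rintro A' B' A B g f ⟨φ₁, ψ₁, φ₂, ψ₂, e1, e2, e3, e4⟩ ⟨Z, d, hf, hZ⟩
    have h1 : IsInflation E (φ₁ ≫ f) := infl_comp hwic (infl_of_split hwic φ₁ ψ₁ e1) ⟨_, _, hf⟩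
    rw [e3] at h1
    obtain ⟨Z', d', hg⟩ := infl_of_comp hwic _ _ h1
    have := conf_epi hg
    obtain ⟨x, hx⟩ := conf_desc hg (φ₂ ≫ d) (by rw [← reassoc_of% e3, E.comp_zero hf, comp_zero])
    obtain ⟨y, hy⟩ := conf_desc hf (ψ₂ ≫ d') (by rw [reassoc_of% e4, E.comp_zero hg, comp_zero])
    refine ⟨Z', d', hg, X_retract hcp x y ?_ hZ⟩
    rw [← cancel_epi d', reassoc_of% hx, hy, reassoc_of% e2, Category.comp_id]
  · rintro A' B' A B g f ⟨φ₁, ψ₁, φ₂, ψ₂, e1, e2, e3, e4⟩ hf W hW w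
    obtain ⟨h, hh⟩ := hf W hW (w ≫ φ₂)
    exact ⟨h ≫ ψ₁, by rw [Category.assoc, ← e4, reassoc_of% hh, e2, Category.comp_id]⟩
  · rintro A' B' A B g f ⟨φ₁, ψ₁, φ₂, ψ₂, e1, e2, e3, e4⟩ hf
    obtain ⟨P', t', hP', ht'⟩ := hep B'
    obtain ⟨P, t, hP, ht⟩ := hep B
    have mP' : P' ∈ X ∩ Y := by rw [hω]; exact hP'
    have mP : P ∈ X ∩ Y := by rw [hω]; exact hP
    have h1 : IsDeflation E (biprod.desc (t' ≫ φ₂) t) := defl_desc hwic _ ht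
    obtain ⟨K, k, hk⟩ := defl_desc hwic f h1
    obtain ⟨K', k', hk'⟩ := defl_desc hwic g ht'
    have hKY := (weq_iff hwic hcp hω (omega_biprod hwic hcp mP' mP) hk).1 hf
    refine (weq_iff hwic hcp hω mP' hk').2 ?_
    obtain ⟨u, hu⟩ := hP t' ht' (t ≫ ψ₂)
    have := conf_mono hk'
    have c1 : biprod.map φ₁ (biprod.inl : P' ⟶ P' ⊞ P) ≫
        biprod.desc f (biprod.desc (t' ≫ φ₂) t) = biprod.desc g t' ≫ φ₂ := by
      ext <;> simp [e3]
    have c2 : biprod.map ψ₁ (biprod.desc (𝟙 P') u) ≫ biprod.desc g t' =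
        biprod.desc f (biprod.desc (t' ≫ φ₂) t) ≫ ψ₂ := by
      ext <;> simp [e4, hu, e2]
    obtain ⟨x, hx⟩ := conf_lift hk (k' ≫ biprod.map φ₁ biprod.inl) (by
      rw [Category.assoc, c1, reassoc_of% (E.comp_zero hk'), zero_comp])
    obtain ⟨y, hy⟩ := conf_lift hk' (k ≫ biprod.map ψ₁ (biprod.desc (𝟙 P') u)) (by
      rw [Category.assoc, c2, reassoc_of% (E.comp_zero hk), zero_comp])
    refine Y_retract hcp x y ?_ hKY
    rw [← cancel_mono k', Category.assoc, hy, reassoc_of% hx, Category.id_comp]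
    have c3 : biprod.map φ₁ (biprod.inl : P' ⟶ P' ⊞ P) ≫
        biprod.map ψ₁ (biprod.desc (𝟙 P') u) = 𝟙 _ := by
      ext <;> simp [e1]
    rw [c3, Category.comp_id]
  · rintro A B M N i p a b ⟨Z, d, hi, hZ⟩ hw hp hab
    have hZω := tcof hwic hher hi hZ hw
    have hZp : IsProjObj E Z := hωp Z hZω.1 hZω.2
    obtain ⟨s, hs⟩ := hZp d ⟨_, _, hi⟩ (𝟙 Z)
    obtain ⟨r, hr1, hr2, hr3⟩ := conf_section hi s hs
    obtain ⟨h, hh⟩ := hp Z hZω (s ≫ b)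
    refine ⟨r ≫ a + d ≫ h, ?_, ?_⟩
    · rw [Preadditive.comp_add, reassoc_of% hr1, reassoc_of% (E.comp_zero hi)]; simp
    · rw [Preadditive.add_comp, Category.assoc, Category.assoc, hab, hh]
      have := hr3 =≫ b
      simpa using this
  · rintro A B M N i p a b ⟨Z, d, hi, hZ⟩ hp hw hab
    obtain ⟨K, k, hk⟩ := (fib_iff hwic hep hω p).1 hp
    have hK := (defl_weq_iff hwic hcp hω hk).1 hw
    exact ext_lifting (ext_zero hcp hZ hK) hi hk a b hab
  · intro A B f
    obtain ⟨P, t, hP, ht⟩ := hep B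
    have mP : P ∈ X ∩ Y := by rw [hω]; exact hP
    have h0 : (0 : 𝒜) ∈ X ∩ Y := by rw [hω]; exact proj_zero
    refine ⟨A ⊞ P, biprod.inl, biprod.desc f t, by simp, ⟨P, biprod.snd, conf_biprod A P, mP.1⟩,
      ⟨P, mP, biprod.inr, 0, 0, ?_, h0.2⟩, (fib_iff hwic hep hω _).2 (defl_desc hwic f ht)⟩
    have : biprod.desc (biprod.inl : A ⟶ A ⊞ P) biprod.inr = 𝟙 _ := by ext <;> simp
    rw [this]
    exact E.id_deflation _
  · intro A B f
    obtain ⟨P, t, hP, ht⟩ := hep B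
    have mP : P ∈ X ∩ Y := by rw [hω]; exact hP
    obtain ⟨K, k, hk⟩ := defl_desc hwic f ht
    obtain ⟨-, Y1, X1, j, e, hje, hX1, hY1⟩ := hcomp K
    obtain ⟨D, f', i', _, _, po, -⟩ := E.pushout_inflation hk j
    obtain ⟨q, hq, hfq⟩ := conf_pushout hk po
    obtain ⟨q', hq', -⟩ := conf_pushout hje po.flip
    obtain ⟨C', c, z, w, hzw, -, -, hc⟩ := conf_po_defl hwic (conf_biprod A P) hq'
    refine ⟨D, biprod.inl ≫ f', q, by rw [Category.assoc, hfq, biprod.inl_desc],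
      ⟨C', c, hc, X_ext hcp hzw mP.1 hX1⟩, (fib_iff hwic hep hω _).2 ⟨_, _, hq⟩,
      (defl_weq_iff hwic hcp hω hq).2 hY1⟩

lemma fibrant_all (ω : Set 𝒜) (A : 𝒜) : Fibrant (FibO ω) A :=
  fun _ _ _ => ⟨0, (isZero_zero 𝒜).eq_of_tgt _ _⟩

end Helpers


/-- The `ω`-model structure is exact iff `𝒜` has enough projectives and
`ω` is the class of projective objects. -/
theorem stmt_14 (E : ExactStructure 𝒜) (hwic : IsWIC E) (X Y : Set 𝒜)
    (hcp : IsCotorsionPair E X Y) (hcomp : IsCompleteCP E X Y)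
    (hher : IsHereditaryCP E X Y) (hcf : IsContravariantlyFinite (X ∩ Y)) :
    IsExactModelStr E (CoFibO E X) (FibO (X ∩ Y)) (WeqO E (X ∩ Y) Y) ↔
      (HasEnoughProj E ∧ X ∩ Y = {P : 𝒜 | IsProjObj E P}) := by
  constructor
  · rintro ⟨-, -, hF⟩
    have hproj : ∀ W, W ∈ X ∩ Y → IsProjObj E W := by
      intro W hW A B d hd g
      obtain ⟨K, k, hk⟩ := hd
      exact (hF d).2 ⟨K, k, hk, fibrant_all _ K⟩ W hW g
    have happ : ∀ B : 𝒜, ∃ (W : 𝒜) (t : W ⟶ B), W ∈ X ∩ Y ∧ IsDeflation E t := by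
      intro B
      obtain ⟨W, t, hW, ht⟩ := hcf B
      obtain ⟨K, k, hk, -⟩ := (hF t).1 ht
      exact ⟨W, t, hW, K, k, hk⟩
    refine ⟨fun B => ?_, Set.Subset.antisymm hproj fun P hP => ?_⟩
    · obtain ⟨W, t, hW, ht⟩ := happ B
      exact ⟨W, t, hproj W hW, ht⟩
    · obtain ⟨W, t, hW, ht⟩ := happ P
      have hP' : IsProjObj E P := hP
      obtain ⟨s, hs⟩ := hP' t ht (𝟙 P)
      exact ⟨X_retract hcp s t hs hW.1, Y_retract hcp s t hs hW.2⟩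
  · rintro ⟨hep, hω⟩
    refine ⟨model hwic hcp hcomp hher hep hω, ?_, ?_⟩
    · intro A B f
      constructor
      · rintro ⟨Z, d, h, hZ⟩
        exact ⟨Z, d, h, (cofibrant_iff hcp Z).2 hZ⟩
      · rintro ⟨Z, d, h, hZ⟩
        exact ⟨Z, d, h, (cofibrant_iff hcp Z).1 hZ⟩
    · intro A B f
      rw [fib_iff hwic hep hω]
      constructor
      · rintro ⟨K, k, hk⟩
        exact ⟨K, k, hk, fibrant_all _ K⟩
      · rintro ⟨K, k, hk, -⟩
        exact ⟨K, k, hk⟩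
end

section
/- Let (CoFib, Fib, Weq) be a closed model structure on an exact category 𝒜. Assume that the cofibrations are exactly the inflations with cofibrant cokernel and that every trivial fibration is a deflation. Then (𝒞, T𝓕) is a complete cotorsion pair in 𝒜, where 𝒞 is the class of cofibrant objects and T𝓕 is the class of trivially fibrant objects. -/
open CategoryTheory Limits ZeroObject

universe v u

variable {𝒜 : Type u} [Category.{v} 𝒜] [Preadditive 𝒜] [HasZeroObject 𝒜]
  [HasBinaryBiproducts 𝒜]

theorem aux_trivfib (C F W : MorphismProperty 𝒜) (hms : IsModelStructure C F W) (B : 𝒜) :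
    TrivialObj W B ↔ W (0 : B ⟶ (0 : 𝒜)) := by
  have h0 : W (𝟙 (0 : 𝒜)) := by
    obtain ⟨Z, i, p, h, -, hi, -⟩ := hms.fact_left (𝟙 (0 : 𝒜))
    exact hms.retract_weq _ i ⟨𝟙 _, 𝟙 _, i, p, by simp, h, by simp, by simp [h]⟩ hi
  have h1 : (0 : (0 : 𝒜) ⟶ B) ≫ (0 : B ⟶ (0 : 𝒜)) = 𝟙 _ := by simp
  constructor
  · intro h
    exact hms.weq_cancel_left _ _ h (by rw [h1]; exact h0)
  · intro h
    exact hms.weq_cancel_right _ _ h (by rw [h1]; exact h0)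

theorem aux_ker (E : ExactStructure 𝒜) {X Y Z T : 𝒜} {i : X ⟶ Y} {d : Y ⟶ Z}
    (h : E.conflation i d) (f : T ⟶ Y) (hf : f ≫ d = 0) : ∃ l : T ⟶ X, l ≫ i = f := by
  obtain ⟨hl⟩ := E.isKernel h
  obtain ⟨l, hl⟩ := KernelFork.IsLimit.lift' hl f hf
  exact ⟨l, hl⟩

theorem aux_coker (E : ExactStructure 𝒜) {X Y Z T : 𝒜} {i : X ⟶ Y} {d : Y ⟶ Z}
    (h : E.conflation i d) (f : Y ⟶ T) (hf : i ≫ f = 0) : ∃ l : Z ⟶ T, d ≫ l = f := by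
  obtain ⟨hl⟩ := E.isCokernel h
  obtain ⟨l, hl⟩ := CokernelCofork.IsColimit.desc' hl f hf
  exact ⟨l, hl⟩

theorem aux_mono (E : ExactStructure 𝒜) {X Y Z : 𝒜} {i : X ⟶ Y} {d : Y ⟶ Z}
    (h : E.conflation i d) : Mono i := by
  obtain ⟨hl⟩ := E.isKernel h
  exact ⟨fun a b hab => Fork.IsLimit.hom_ext hl hab⟩

theorem aux_epi (E : ExactStructure 𝒜) {X Y Z : 𝒜} {i : X ⟶ Y} {d : Y ⟶ Z}
    (h : E.conflation i d) : Epi d := by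
  obtain ⟨hl⟩ := E.isCokernel h
  exact ⟨fun a b hab => Cofork.IsColimit.hom_ext hl hab⟩

/-- If cofibrations are exactly inflations with cofibrant cokernel and every
trivial fibration is a deflation, then `(𝒞, T𝓕)` is a complete cotorsion pair. -/
theorem stmt_16 (E : ExactStructure 𝒜) (C F W : MorphismProperty 𝒜)
    (hms : IsModelStructure C F W)
    (hcof : CofibsAreInflWithCofibCoker E C)
    (htf : TrivFibsAreDefl E F W) :
    IsCotorsionPair E {A : 𝒜 | Cofibrant C A} {B : 𝒜 | Fibrant F B ∧ TrivialObj W B} ∧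
    IsCompleteCP E {A : 𝒜 | Cofibrant C A} {B : 𝒜 | Fibrant F B ∧ TrivialObj W B} := by
  have hext : ∀ A B : 𝒜, Cofibrant C A → Fibrant F B ∧ TrivialObj W B → Ext1IsZero E A B := by
    intro A B hA hB M i d hid
    obtain ⟨r, hr, -⟩ := hms.lifting_right i (0 : B ⟶ (0 : 𝒜)) (𝟙 B) 0
      ((hcof i).2 ⟨A, d, hid, hA⟩) hB.1 ((aux_trivfib C F W hms B).1 hB.2) (by simp)
    exact ⟨r, hr⟩
  have hTF : ∀ B : 𝒜, (∀ A : 𝒜, Cofibrant C A → Ext1IsZero E A B) →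
      Fibrant F B ∧ TrivialObj W B := by
    intro B h
    obtain ⟨Z, j, q, -, hj, hqF, hqW⟩ := hms.fact_right (0 : B ⟶ (0 : 𝒜))
    obtain ⟨A, d, hd, hA⟩ := (hcof j).1 hj
    obtain ⟨r, hr⟩ := h A hA j d hd
    have hret : IsRetractMor (0 : B ⟶ (0 : 𝒜)) q :=
      ⟨j, r, 𝟙 _, 𝟙 _, hr, by simp, (isZero_zero 𝒜).eq_of_tgt _ _,
        (isZero_zero 𝒜).eq_of_tgt _ _⟩
    exact ⟨hms.retract_fib _ _ hret hqF,
      (aux_trivfib C F W hms B).2 (hms.retract_weq _ _ hret hqW)⟩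
  have happ : ∀ A : 𝒜, ∃ (Y₀ X₀ : 𝒜) (i : Y₀ ⟶ X₀) (d : X₀ ⟶ A), E.conflation i d ∧
      Cofibrant C X₀ ∧ (Fibrant F Y₀ ∧ TrivialObj W Y₀) := by
    intro A
    obtain ⟨Z, j, q, -, hj, hqF, hqW⟩ := hms.fact_right (0 : (0 : 𝒜) ⟶ A)
    obtain ⟨K, k, hk⟩ := htf q hqF hqW
    obtain rfl : j = 0 := (isZero_zero 𝒜).eq_of_src _ _
    refine ⟨K, Z, k, q, hk, hj, hTF K ?_⟩
    intro A' hA' M i d hid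
    obtain ⟨s, hs, hsq⟩ := hms.lifting_right i q k 0
      ((hcof i).2 ⟨A', d, hid, hA'⟩) hqF hqW (by simp [E.comp_zero hk])
    obtain ⟨r, hr⟩ := aux_ker E hk s hsq
    have := aux_mono E hk
    refine ⟨r, ?_⟩
    rw [← cancel_mono k, Category.assoc, hr, hs, Category.id_comp]
  refine ⟨⟨fun A => ⟨fun hA B hB => hext A B hA hB, fun h => ?_⟩,
    fun B => ⟨fun hB A hA => hext A B hA hB, fun h => hTF B h⟩⟩, fun A => ⟨happ A, ?_⟩⟩
  · obtain ⟨K, Z, k, q, hk, hZ, hK⟩ := happ A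
    obtain ⟨r, hr⟩ := h K hK k q hk
    obtain ⟨s, hs⟩ := aux_coker E hk (𝟙 Z - r ≫ k) (by
      rw [Preadditive.comp_sub, ← Category.assoc, hr]; simp)
    have := aux_epi E hk
    have hsq : s ≫ q = 𝟙 A := by
      rw [← cancel_epi q, ← Category.assoc, hs, Preadditive.sub_comp, Category.assoc,
        E.comp_zero hk]
      simp
    exact hms.retract_cofib _ _ ⟨𝟙 _, 𝟙 _, s, q, by simp, hsq, by simp, by simp⟩ hZ
  · obtain ⟨Z, j, q, -, hj, hqF, hqW⟩ := hms.fact_right (0 : A ⟶ (0 : 𝒜))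
    obtain ⟨X, d, hd, hX⟩ := (hcof j).1 hj
    obtain rfl : q = 0 := (isZero_zero 𝒜).eq_of_tgt _ _
    exact ⟨Z, X, j, d, hd, hX, hqF, (aux_trivfib C F W hms Z).2 hqW⟩
end
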